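/- arXiv:2105.04307 — 2 statements merged into one kernel-verified Lean document; each statement's English description precedes it below -/
import Mathlib

section
/- The sum over nonzero Eisenstein integers Σ_{κ ∈ ℤ[e^{πi/3}]∖{0}} 1/((1 − 2κ)κ²) equals 2π/√3 − 4. -/
open Complex

noncomputable section

/-- `e^{πi/3}`. -/
def τ : ℂ := Complex.exp (Real.pi * Complex.I / 3)

/-- The point `mϖ + n e^{πi/3} ϖ` of the hexagonal lattice with real period `ϖ`. -/
def hexPt (ϖ : ℝ) (p : ℤ × ℤ) : ℂ := p.1 * ϖ + p.2 * τ * ϖ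

/-- The hexagonal lattice `𝕋 = ℤϖ + ℤ e^{πi/3} ϖ`. -/
def hexLattice (ϖ : ℝ) : Set ℂ := Set.range (hexPt ϖ)

/-- The real fundamental period `ϖ = Γ(1/3)³/(2π)`. -/
def ϖ₀ : ℝ := (Real.Gamma (1/3))^3 / (2 * Real.pi)

/-- The Weierstrass `℘`-function of the hexagonal lattice `𝕋 = ℤϖ₀ + ℤ e^{πi/3} ϖ₀`,
i.e. the `℘`-function with invariants `g₂ = 0`, `g₃ = 1`. -/
def wp (z : ℂ) : ℂ :=
  1 / z ^ 2 + ∑' p : {p : ℤ × ℤ // p ≠ 0}, (1 / (z - hexPt ϖ₀ p) ^ 2 - 1 / (hexPt ϖ₀ p) ^ 2)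

/-- The Weierstrass `σ`-function of the hexagonal lattice with real period `ϖ`. -/
def wSigma (ϖ : ℝ) (z : ℂ) : ℂ :=
  z * ∏' p : {p : ℤ × ℤ // p ≠ 0},
    ((1 - z / hexPt ϖ p) * Complex.exp (z / hexPt ϖ p + z ^ 2 / (2 * (hexPt ϖ p) ^ 2)))

/-- The Weierstrass `ζ`-function of the hexagonal lattice with real period `ϖ`. -/
def wZeta (ϖ : ℝ) (z : ℂ) : ℂ :=
  1 / z + ∑' p : {p : ℤ × ℤ // p ≠ 0},
    (1 / (z - hexPt ϖ p) + 1 / hexPt ϖ p + z / (hexPt ϖ p) ^ 2)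

/-- The Eisenstein integer `a + b e^{πi/3}`. -/
def eisen (p : ℤ × ℤ) : ℂ := (p.1 : ℂ) + (p.2 : ℂ) * τ

section helpers

lemma tau_eq : τ = 1 / 2 + (Real.sqrt 3 / 2 : ℝ) * Complex.I := by
  have h : (Real.pi * Complex.I / 3 : ℂ) = ((Real.pi / 3 : ℝ) : ℂ) * Complex.I := by
    push_cast; ring
  rw [τ, h, Complex.exp_mul_I, ← Complex.ofReal_cos, ← Complex.ofReal_sin, Real.cos_pi_div_three,
    Real.sin_pi_div_three]
  push_cast; ring

lemma tau_re : τ.re = 1 / 2 := by rw [tau_eq]; simp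
lemma tau_im : τ.im = Real.sqrt 3 / 2 := by rw [tau_eq]; simp

lemma tau_sq : τ ^ 2 = τ - 1 := by
  have h : (Real.sqrt 3 : ℂ) ^ 2 = 3 := by
    rw [← Complex.ofReal_pow, Real.sq_sqrt (by norm_num)]; norm_num
  rw [tau_eq]; push_cast
  linear_combination (-1 / 4 : ℂ) * h + ((Real.sqrt 3 : ℂ) ^ 2 / 4) * Complex.I_sq

def tauH : UpperHalfPlane := ⟨τ, by rw [tau_im]; positivity⟩

lemma coe_tauH : (tauH : ℂ) = τ := rfl

lemma tau_ne : τ ≠ 0 := Complex.exp_ne_zero _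

lemma G2_tau : EisensteinSeries.G2 tauH = ((2 * Real.pi / Real.sqrt 3 : ℝ) : ℂ) := by
  have hS := EisensteinSeries.G2_S_transform tauH
  have hT : EisensteinSeries.G2 (ModularGroup.S • tauH) = EisensteinSeries.G2 tauH := by
    have h := congrFun EisensteinSeries.G2_T_transform (ModularGroup.S • tauH)
    have e : ModularGroup.T • (ModularGroup.S • tauH) = tauH := by
      ext
      rw [UpperHalfPlane.modular_T_smul, UpperHalfPlane.modular_S_smul]
      simp only [UpperHalfPlane.coe_vadd, coe_tauH]
      simp [coe_tauH]
      have := tau_ne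
      field_simp
      linear_combination -tau_sq
    have hd : UpperHalfPlane.denom ModularGroup.T (ModularGroup.S • tauH : UpperHalfPlane) = 1 := by
      rw [ModularGroup.denom_apply]
      simp [ModularGroup.T]
    rw [ModularForm.SL_slash_apply, e, hd, one_zpow, mul_one] at h
    exact h.symm
  rw [hT, coe_tauH] at hS
  have h3 : (Real.sqrt 3 : ℂ) ≠ 0 := by simp
  have h2 : 2 * τ - 1 = Real.sqrt 3 * Complex.I := by rw [tau_eq]; push_cast; ring
  have h4 : EisensteinSeries.G2 tauH * (2 * τ - 1) = 2 * Real.pi * Complex.I := by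
    have := tau_ne
    field_simp at hS
    have : τ * (EisensteinSeries.G2 tauH * (2 * τ - 1) - 2 * Real.pi * Complex.I) = 0 := by
      linear_combination hS + EisensteinSeries.G2 tauH * tau_sq
    grind
  rw [h2] at h4
  push_cast
  rw [eq_div_iff h3]
  apply mul_right_cancel₀ Complex.I_ne_zero
  linear_combination h4

/-- The summand. -/
def FF (κ : ℂ) : ℂ := 1 / ((1 - 2 * κ) * κ ^ 2)

def kap (p : ℤ × ℤ) : ℂ := (p.1 : ℂ) * τ + p.2

lemma kap_norm_sq (p : ℤ × ℤ) : ‖kap p‖ ^ 2 = ((p.1 ^ 2 + p.1 * p.2 + p.2 ^ 2 : ℤ) : ℝ) := by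
  rw [← Complex.normSq_eq_norm_sq, Complex.normSq_apply]
  simp only [kap, Complex.add_re, Complex.mul_re, Complex.intCast_re, Complex.intCast_im,
    Complex.add_im, Complex.mul_im, tau_re, tau_im]
  have := Real.sq_sqrt (show (0 : ℝ) ≤ 3 by norm_num)
  push_cast
  linear_combination ((p.1 : ℝ) ^ 2 / 4) * this

lemma kap_norm_ge (p : ℤ × ℤ) (hp : p ≠ 0) : 1 ≤ ‖kap p‖ := by
  have h : (1 : ℤ) ≤ p.1 ^ 2 + p.1 * p.2 + p.2 ^ 2 := by
    by_contra! hc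
    apply hp
    have h1 : p.1 = 0 := by
      by_contra h
      have : 0 < p.1 ^ 2 := by positivity
      nlinarith [sq_nonneg (p.1 + 2 * p.2)]
    have h2 : p.2 = 0 := by
      by_contra h
      have : 0 < p.2 ^ 2 := by positivity
      nlinarith [sq_nonneg (2 * p.1 + p.2)]
    exact Prod.ext h1 h2
  have h' : (1 : ℝ) ≤ ‖kap p‖ ^ 2 := by rw [kap_norm_sq]; exact_mod_cast h
  nlinarith [norm_nonneg (kap p)]

lemma kap_ne (p : ℤ × ℤ) (hp : p ≠ 0) : kap p ≠ 0 := by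
  have := kap_norm_ge p hp
  intro h
  rw [h, norm_zero] at this
  linarith

lemma one_sub_norm (p : ℤ × ℤ) (hp : p ≠ 0) : ‖kap p‖ ≤ ‖1 - 2 * kap p‖ := by
  have h1 := kap_norm_ge p hp
  have h2 := norm_sub_norm_le (2 * kap p) 1
  rw [norm_sub_rev] at h2
  simp at h2
  linarith

lemma one_sub_ne (p : ℤ × ℤ) : 1 - 2 * kap p ≠ 0 := by
  by_cases hp : p = 0
  · simp [hp, kap]
  · have := one_sub_norm p hp
    have := kap_norm_ge p hp
    intro h
    have h' : ‖1 - 2 * kap p‖ = 0 := by rw [h, norm_zero]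
    linarith

lemma kap_neg (p : ℤ × ℤ) : kap (-p) = - kap p := by simp [kap]; ring

lemma one_add_ne (p : ℤ × ℤ) : 1 + 2 * kap p ≠ 0 := by
  have := one_sub_ne (-p)
  rw [kap_neg] at this
  simpa using this

lemma FF_summable : Summable (fun p : ℤ × ℤ => FF (kap p)) := by
  have h0 : Summable (fun p : ℤ × ℤ => ‖(kap p)⁻¹‖ ^ 3) := by
    rw [← (finTwoArrowEquiv ℤ).summable_iff]
    apply EisensteinSeries.summable_of_isBigO_rpow_norm (a := 3) (by norm_num)
    have h := EisensteinSeries.isBigO_linear_add_const_vec tauH 0 0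
    have := (h.norm_left.pow 3)
    simpa [kap, coe_tauH, Function.comp_def] using this
  refine Summable.of_norm_bounded h0 (fun p => ?_)
  by_cases hp : p = 0
  · simp [hp, kap, FF]
  · have h1 := one_sub_norm p hp
    have h2 := kap_norm_ge p hp
    rw [FF, norm_div, norm_mul, norm_pow, norm_inv, norm_one, inv_pow, ← one_div]
    apply one_div_le_one_div_of_le (by positivity)
    nlinarith [sq_nonneg ‖kap p‖]

def HH (p : ℤ × ℤ) : ℂ := (FF (kap p) + FF (kap (-p))) / 2

lemma FF_neg_summable : Summable (fun p : ℤ × ℤ => FF (kap (-p))) :=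
  (Equiv.neg (ℤ × ℤ)).summable_iff.mpr FF_summable

lemma HH_hasSum : HasSum HH (∑' p : ℤ × ℤ, FF (kap p)) := by
  have h1 := FF_summable.hasSum
  have h2 : HasSum (fun p : ℤ × ℤ => FF (kap (-p))) (∑' p : ℤ × ℤ, FF (kap p)) :=
    (Equiv.neg (ℤ × ℤ)).hasSum_iff.mpr h1
  have h3 := (h1.add h2).div_const 2
  rw [add_self_div_two] at h3
  exact h3

lemma HH_eq (m n : ℤ) : HH (m, n) = EisensteinSeries.eisSummand 2 ![m, n] tauH
    - (1 / (kap (m, n) - 1 / 2) - 1 / (kap (m, n) + 1 / 2))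
    - if n = 0 then (if m = 0 then 4 else 0) else 0 := by
  have e : EisensteinSeries.eisSummand 2 ![m, n] tauH = 1 / (kap (m, n)) ^ 2 := by
    simp [EisensteinSeries.eisSummand, kap, coe_tauH]
  rw [e, HH, kap_neg]
  by_cases hp : (m, n) = (0 : ℤ × ℤ)
  · obtain ⟨rfl, rfl⟩ : m = 0 ∧ n = 0 := by simpa using hp
    simp [kap, FF]; norm_num
  · have hne : (if n = 0 then (if m = 0 then (4 : ℂ) else 0) else 0) = 0 := by
      split_ifs with h1 h2
      · exact absurd (by simp [h1, h2]) hp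
      · rfl
      · rfl
    rw [hne]
    have h1 := one_sub_ne (m, n)
    have h2 := one_add_ne (m, n)
    have h3 := kap_ne _ hp
    generalize kap (m, n) = k at *
    have h4 : k - 1 / 2 ≠ 0 := fun h => h1 (by linear_combination -2 * h)
    have h5 : k + 1 / 2 ≠ 0 := fun h => h2 (by linear_combination 2 * h)
    have e1 : k - 1 / 2 = -(1 - 2 * k) / 2 := by ring
    have e2 : k + 1 / 2 = (1 + 2 * k) / 2 := by ring
    rw [e1, e2]
    simp only [FF]
    rw [show 1 - 2 * -k = 1 + 2 * k by ring]
    field_simp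
    ring

lemma inv_tendsto (w : ℂ) : Filter.Tendsto (fun N : ℕ => 1 / (w + N)) Filter.atTop (nhds 0) := by
  simp only [one_div]
  apply Filter.tendsto_inv₀_cobounded.comp
  rw [← tendsto_norm_atTop_iff_cobounded]
  refine Filter.tendsto_atTop_mono (f := fun N : ℕ => (N : ℝ) - ‖w‖) (fun N => ?_)
    (Filter.tendsto_atTop_add_const_right _ _ tendsto_natCast_atTop_atTop)
  have h := norm_sub_norm_le (N : ℂ) (-w)
  rw [Complex.norm_natCast, norm_neg, sub_neg_eq_add, add_comm] at h
  exact h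

lemma telescope (w : ℂ) (h : Summable (fun n : ℤ => 1 / (w + n) - 1 / (w + n + 1))) :
    HasSum (fun n : ℤ => 1 / (w + n) - 1 / (w + n + 1)) 0 := by
  have h1 := h.hasSum
  have h2 : HasSum (fun n : ℤ => 1 / (w + n) - 1 / (w + n + 1)) 0
      (SummationFilter.symmetricIco ℤ) := by
    rw [SummationFilter.hasSum_symmetricIco_int_iff]
    have key : ∀ N : ℕ, ∑ n ∈ Finset.Ico (-(N : ℤ)) (N : ℤ), (1 / (w + n) - 1 / (w + n + 1))
        = -(1 / (-w + N)) - 1 / (w + N) := by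
      intro N
      convert Finset.sum_Ico_int_sub N (fun n : ℤ => 1 / (w + n)) using 2
      · simp [add_assoc]
      · rw [← one_div_neg_eq_neg_one_div]; push_cast; congr 1; ring
      · simp
    simp_rw [key]
    simpa using (inv_tendsto (-w)).neg.sub (inv_tendsto w)
  have h3 : HasSum (fun n : ℤ => 1 / (w + n) - 1 / (w + n + 1)) _
      (SummationFilter.symmetricIco ℤ) := h1.mono_left (SummationFilter.LeAtTop.le_atTop)
  rwa [h3.unique h2] at h1

lemma row (m : ℤ) : HasSum (fun n => HH (m, n))
    (EisensteinSeries.e2Summand m tauH - if m = 0 then 4 else 0) := by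
  have h1 := (EisensteinSeries.e2Summand_summable m tauH).hasSum
  have h2 : HasSum (fun n : ℤ => if n = 0 then (if m = 0 then (4 : ℂ) else 0) else 0) _ :=
    hasSum_ite_eq 0 _
  have h3 : Summable (fun n => HH (m, n)) := HH_hasSum.summable.prod_factor m
  have ef : ∀ n : ℤ, 1 / ((m * τ - 1 / 2) + n) - 1 / ((m * τ - 1 / 2) + n + 1)
      = 1 / (kap (m, n) - 1 / 2) - 1 / (kap (m, n) + 1 / 2) := by
    intro n
    simp only [kap]
    congr 2 <;> ring
  have h4 := telescope (m * τ - 1 / 2) (by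
    refine ((h1.summable.sub h2.summable).sub h3).congr (fun n => ?_)
    rw [ef, HH_eq]; ring)
  have h5 := (h1.sub h4).sub h2
  rw [sub_zero] at h5
  have h6 : (fun n => HH (m, n)) = _ := funext fun n => by rw [HH_eq, ← ef]
  rw [h6]
  exact h5

lemma total : ∑' p : ℤ × ℤ, FF (kap p) = EisensteinSeries.G2 tauH - 4 := by
  have h1 := HH_hasSum.prod_fiberwise row
  have h2 : HasSum (fun m : ℤ => EisensteinSeries.e2Summand m tauH - if m = 0 then 4 else 0)
    (∑' p : ℤ × ℤ, FF (kap p)) (SummationFilter.symmetricIcc ℤ) :=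
      h1.mono_left (SummationFilter.LeAtTop.le_atTop)
  have h3 := (EisensteinSeries.summable_e2Summand_symmetricIcc tauH).hasSum
  have h4 : HasSum (fun m : ℤ => if m = 0 then (4 : ℂ) else 0) 4
    (SummationFilter.symmetricIcc ℤ) := hasSum_ite_eq 0 4 _
  exact h2.unique (h3.sub h4)

end helpers

/-- `Σ_{κ ∈ ℤ[e^{πi/3}]∖{0}} 1/((1 − 2κ)κ²) = 2π/√3 − 4`. -/
theorem eisenstein_sum :
    ∑' p : {p : ℤ × ℤ // p ≠ 0}, 1 / ((1 - 2 * eisen p.1) * (eisen p.1) ^ 2)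
      = ((2 * Real.pi / Real.sqrt 3 - 4 : ℝ) : ℂ) := by
  have h1 : ∀ p : ℤ × ℤ, 1 / ((1 - 2 * eisen p) * (eisen p) ^ 2) = FF (kap p.swap) := by
    intro p
    have : kap p.swap = eisen p := by simp [kap, eisen, add_comm]
    rw [this, FF]
  simp_rw [h1]
  have h2 : ∑' p : {p : ℤ × ℤ // p ≠ 0}, FF (kap p.1.swap) = ∑' p : ℤ × ℤ, FF (kap p.swap) := by
    apply tsum_subtype_eq_of_support_subset (s := {p : ℤ × ℤ | p ≠ 0})
      (f := fun p => FF (kap p.swap))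
    intro p hp h0
    apply hp
    simp only [h0]
    simp [FF, kap]
  have h3 : ∑' p : ℤ × ℤ, FF (kap p.swap) = ∑' p : ℤ × ℤ, FF (kap p) :=
    (Equiv.prodComm ℤ ℤ).tsum_eq (fun p => FF (kap p))
  rw [h2, h3, total, G2_tau]
  push_cast
  rfl
end
end

section
/- For the hexagonal lattice, ℘(z) = r σ(r^{-1} z)/σ(z)³, where r = (√3/3)e^{πi/6}; equivalently ℘(z) = σ(z; r𝕋)/σ(z; 𝕋)³. -/
open Complex

noncomputable section

/-- `r = (√3/3) e^{πi/6}`. -/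
def rr : ℂ := (Real.sqrt 3 / 3 : ℝ) * Complex.exp (Real.pi * Complex.I / 6)

/-- Weierstrass elementary factor of genus two. -/
def EF (x : ℂ) : ℂ := (1 - x) * Complex.exp (x + x ^ 2 / 2)

lemma EF_zero : EF 0 = 1 := by simp [EF]

lemma EF_bound (x : ℂ) (hx : ‖x‖ ≤ 1 / 2) : ‖EF x - 1‖ ≤ 4 * ‖x‖ ^ 3 := by
  set w := x + x ^ 2 / 2 with hw
  have h0 := norm_nonneg x
  have hwn : ‖w‖ ≤ 5 / 4 * ‖x‖ := by
    calc ‖w‖ ≤ ‖x‖ + ‖x ^ 2 / 2‖ := norm_add_le _ _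
      _ = ‖x‖ + ‖x‖ ^ 2 / 2 := by simp
      _ ≤ _ := by nlinarith
  have hR := Complex.exp_bound (x := w) (by linarith) (n := 3) (by norm_num)
  have hR' : ‖Complex.exp w - (1 + w + w ^ 2 / 2)‖ ≤ (5 / 4 * ‖x‖) ^ 3 := by
    have e : ∑ m ∈ Finset.range 3, w ^ m / (m.factorial : ℂ) = 1 + w + w ^ 2 / 2 := by
      simp [Finset.sum_range_succ, Nat.factorial]
    rw [e] at hR
    refine hR.trans ?_
    have : ‖w‖ ^ 3 ≤ (5 / 4 * ‖x‖) ^ 3 := by gcongr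
    have h3 : (((Nat.succ 3 : ℕ) : ℝ) * (((Nat.factorial 3 : ℕ) : ℝ) * ((3 : ℕ) : ℝ))⁻¹) ≤ 1 := by
      norm_num [Nat.factorial]
    have : ‖w‖ ^ 3 * (((Nat.succ 3 : ℕ) : ℝ) * (((Nat.factorial 3 : ℕ) : ℝ) * ((3 : ℕ) : ℝ))⁻¹)
      ≤ ‖w‖ ^ 3 * 1 := by gcongr
    linarith
  have key : EF x - 1 = (1 - x) * (Complex.exp w - (1 + w + w ^ 2 / 2))
      + x ^ 3 * (-(1 / 2) - 3 / 8 * x - 1 / 8 * x ^ 2) := by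
    rw [EF, ← hw, hw]; ring
  rw [key]
  have h1 : ‖1 - x‖ ≤ 3 / 2 := by
    calc ‖1 - x‖ ≤ ‖(1 : ℂ)‖ + ‖x‖ := norm_sub_le _ _
      _ ≤ _ := by simp; linarith
  have h2 : ‖(-(1 / 2) - 3 / 8 * x - 1 / 8 * x ^ 2 : ℂ)‖ ≤ 1 := by
    calc ‖(-(1 / 2) - 3 / 8 * x - 1 / 8 * x ^ 2 : ℂ)‖
        ≤ ‖(-(1 / 2) : ℂ)‖ + ‖3 / 8 * x‖ + ‖1 / 8 * x ^ 2‖ :=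
          (norm_sub_le _ _).trans (by gcongr; exact norm_sub_le _ _)
      _ = 1 / 2 + 3 / 8 * ‖x‖ + 1 / 8 * ‖x‖ ^ 2 := by simp
      _ ≤ _ := by nlinarith
  calc _ ≤ ‖1 - x‖ * ‖Complex.exp w - (1 + w + w ^ 2 / 2)‖
      + ‖x‖ ^ 3 * ‖(-(1 / 2) - 3 / 8 * x - 1 / 8 * x ^ 2 : ℂ)‖ := by
        refine (norm_add_le _ _).trans (le_of_eq ?_)
        simp only [norm_mul, norm_pow]
    _ ≤ 3 / 2 * (5 / 4 * ‖x‖) ^ 3 + ‖x‖ ^ 3 * 1 := by gcongr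
    _ ≤ _ := by nlinarith [pow_nonneg h0 3]

namespace PeriodPair
open Filter Topology Set
variable (L : PeriodPair)

/-- The Weierstrass product without the linear factor. -/
def PP (z : ℂ) : ℂ := ∏' l : L.lattice, EF (z / l)

lemma eventually_cofinite_lattice (R : ℝ) : ∀ᶠ l : L.lattice in cofinite, R < ‖l.1‖ := by
  refine (isCompact_iff_finite.mp (isCompact_closedBall (0 : L.lattice) R)).subset ?_
  intro l hl
  simpa using hl

lemma EF_div_eventually (r : ℝ) (hr : 0 < r) :
    ∀ᶠ l : L.lattice in cofinite, ∀ x : ℂ, ‖x‖ ≤ r →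
      ‖EF (x / l) - 1‖ ≤ 4 * r ^ 3 * ‖l‖ ^ (-3 : ℝ) := by
  filter_upwards [L.eventually_cofinite_lattice (2 * r)] with l hl x hx
  have hl0 : 0 < ‖l.1‖ := by linarith
  have hq : ‖x / l.1‖ ≤ r / ‖l.1‖ := by rw [norm_div]; gcongr
  have hq2 : r / ‖l.1‖ ≤ 1 / 2 := by rw [div_le_div_iff₀ hl0 (by norm_num)]; linarith
  refine (EF_bound _ (hq.trans hq2)).trans ?_
  have : ‖x / l.1‖ ^ 3 ≤ (r / ‖l.1‖) ^ 3 := by gcongr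
  have e : ‖l‖ ^ (-3 : ℝ) = (‖l.1‖ ^ 3)⁻¹ := by
    rw [Real.rpow_neg (norm_nonneg _)]; norm_cast
  rw [e]
  calc 4 * ‖x / l.1‖ ^ 3 ≤ 4 * (r / ‖l.1‖) ^ 3 := by gcongr
    _ = _ := by rw [div_pow]; ring

lemma summable_bound (r : ℝ) : Summable fun l : L.lattice ↦ 4 * r ^ 3 * ‖l‖ ^ (-3 : ℝ) :=
  (ZLattice.summable_norm_rpow _ _ (by simp; norm_num)).mul_left _

lemma differentiable_EF : Differentiable ℂ EF := by
  unfold EF; fun_prop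

lemma differentiable_EF_div (l : ℂ) : Differentiable ℂ fun z ↦ EF (z / l) :=
  differentiable_EF.comp (by fun_prop)

lemma hasProd_PP : HasProdLocallyUniformlyOn (fun (l : L.lattice) z ↦ EF (z / l)) L.PP univ := by
  refine hasProdLocallyUniformlyOn_of_forall_compact isOpen_univ fun K _ hK ↦ ?_
  obtain ⟨r, hr⟩ := hK.isBounded.exists_norm_le
  have := (L.summable_bound (|r| + 1)).hasProdUniformlyOn_one_add hK
    (f := fun (l : L.lattice) z ↦ EF (z / l) - 1) ?_ ?_
  · simp only [add_sub_cancel] at this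
    exact this
  · filter_upwards [L.EF_div_eventually (|r| + 1) (by positivity)] with l hl x hx
    exact hl x ((hr x hx).trans (by linarith [le_abs_self r]))
  · intro l
    exact ((differentiable_EF_div l.1).continuous.sub continuous_const).continuousOn

lemma differentiable_PP : Differentiable ℂ L.PP := by
  rw [← differentiableOn_univ]
  refine TendstoLocallyUniformlyOn.differentiableOn L.hasProd_PP (.of_forall fun s ↦ ?_) isOpen_univ
  exact .fun_finsetProd fun i _ ↦ (differentiable_EF_div i.1).differentiableOn

lemma EF_ne_zero {x : ℂ} (hx : x ≠ 1) : EF x ≠ 0 := by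
  simp [EF, sub_eq_zero, hx.symm]

lemma EF_div_ne_zero {z l : ℂ} (hz : z ≠ l ∨ l = 0) : EF (z / l) ≠ 0 := by
  apply EF_ne_zero
  rcases eq_or_ne l 0 with h | h
  · simp [h]
  · rw [Ne, div_eq_one_iff_eq h]; grind

lemma PP_ne_zero {z : ℂ} (hz : ∀ l : L.lattice, l ≠ 0 → z ≠ l) : L.PP z ≠ 0 := by
  have := tprod_one_add_ne_zero_of_summable (f := fun l : L.lattice ↦ EF (z / l) - 1) ?_ ?_
  · simpa [PP] using this
  · intro l
    simp only [add_sub_cancel]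
    apply EF_div_ne_zero
    by_cases h : l = 0
    · right; simp [h]
    · left; exact hz l h
  · refine (L.summable_bound (‖z‖ + 1)).of_norm_bounded_eventually ?_
    filter_upwards [L.EF_div_eventually (‖z‖ + 1) (by positivity)] with l hl
    simpa using hl z (by linarith)

lemma PP_zero : L.PP 0 = 1 := by simp [PP, EF_zero]

lemma logDeriv_EF_div {z l : ℂ} (hz : z ≠ l) (hl : l ≠ 0) :
    logDeriv (fun z ↦ EF (z / l)) z = 1 / (z - l) + 1 / l + z / l ^ 2 := by
  have h1 : HasDerivAt (fun z ↦ EF (z / l))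
      ((-(1 / l)) * Complex.exp (z / l + (z / l) ^ 2 / 2) + (1 - z / l) *
        (Complex.exp (z / l + (z / l) ^ 2 / 2) * (1 / l + (2 * (z / l) ^ 1 * (1 / l)) / 2))) z := by
    have h0 : HasDerivAt (fun z : ℂ ↦ z / l) (1 / l) z := (hasDerivAt_id z).div_const l
    have := (h0.const_sub 1).mul (h0.add ((h0.pow 2).div_const 2)).cexp
    simpa [EF] using! this
  have h2 : z - l ≠ 0 := sub_ne_zero.mpr hz
  have h3 : 1 - z / l ≠ 0 := by
    rw [Ne, sub_eq_zero, eq_comm, div_eq_one_iff_eq hl]; exact hz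
  rw [logDeriv_apply, h1.deriv, EF]
  have h4 : l - z ≠ 0 := fun h ↦ h2 (by linear_combination -h)
  have h5 := Complex.exp_ne_zero (z / l + (z / l) ^ 2 / 2)
  rw [div_eq_iff (mul_ne_zero h3 h5)]
  field_simp
  ring

lemma logDeriv_EF_zero (z : ℂ) : logDeriv (fun z ↦ EF (z / 0)) z = 0 := by
  simp [logDeriv_apply]

/-- The Weierstrass sigma function. -/
def sig (z : ℂ) : ℂ := z * L.PP z

lemma differentiable_sig : Differentiable ℂ L.sig := differentiable_id.mul L.differentiable_PP

lemma sig_ne_zero {z : ℂ} (hz : z ∉ L.lattice) : L.sig z ≠ 0 := by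
  refine mul_ne_zero ?_ (L.PP_ne_zero ?_)
  · rintro rfl; simp at hz
  · rintro l - rfl; exact hz l.2

lemma PP_ne_zero' {z : ℂ} (hz : z ∉ L.lattice) : L.PP z ≠ 0 :=
  right_ne_zero_of_mul (L.sig_ne_zero hz)

lemma isOpen_compl : IsOpen ((L.lattice : Set ℂ)ᶜ) := L.isClosed_lattice.isOpen_compl

lemma isPreconnected_compl : IsPreconnected ((L.lattice : Set ℂ)ᶜ) := by
  refine (Set.Countable.isConnected_compl_of_one_lt_rank (by simp [Complex.rank_real_complex]) ?_).2
  have : Countable L.lattice := L.latticeEquivProd.toEquiv.countable_iff.mpr inferInstance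
  exact Set.to_countable _

lemma deriv_logDeriv_PP {z : ℂ} (hz : z ∉ L.lattice) :
    deriv (logDeriv L.PP) z = - L.weierstrassPExcept 0 z := by
  set U : Set ℂ := (L.lattice : Set ℂ)ᶜ
  have hU : IsOpen U := L.isOpen_compl
  have hF : TendstoLocallyUniformlyOn (fun (s : Finset L.lattice) z ↦ ∏ l ∈ s, EF (z / l)) L.PP
    atTop U := L.hasProd_PP.mono (subset_univ _)
  have hd (s : Finset L.lattice) : DifferentiableOn ℂ (fun z ↦ ∏ l ∈ s, EF (z / l)) U :=
    .fun_finsetProd fun i _ ↦ (differentiable_EF_div i.1).differentiableOn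
  have hF' := hF.deriv (.of_forall hd) hU
  have hPd : DifferentiableOn ℂ L.PP U := L.differentiable_PP.differentiableOn
  have hq := hF'.div₀ hF (hPd.deriv hU).continuousOn hPd.continuousOn
    (fun x hx ↦ L.PP_ne_zero' hx)
  have hne (s : Finset L.lattice) (x) (hx : x ∈ U) : ∏ l ∈ s, EF (x / l) ≠ 0 := by
    refine Finset.prod_ne_zero_iff.mpr fun l _ ↦ EF_div_ne_zero (.inl ?_)
    rintro rfl; exact hx l.2
  have hqd := hq.deriv (.of_forall fun s ↦ ((hd s).deriv hU).div (hd s) (hne s)) hU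
  have ht := hqd.tendsto_at hz
  refine tendsto_nhds_unique ht ?_
  have hs : Tendsto (fun s : Finset L.lattice ↦
    ∑ l ∈ s, -(if l.1 = 0 then 0 else (1 / (z - l) ^ 2 - 1 / l ^ 2))) atTop
      (𝓝 (- L.weierstrassPExcept 0 z)) := (L.hasSum_weierstrassPExcept 0 z).neg
  refine hs.congr fun s ↦ ?_
  have e : EqOn (deriv (fun z ↦ ∏ l ∈ s, EF (z / l)) / fun z ↦ ∏ l ∈ s, EF (z / l))
      (fun z ↦ ∑ l ∈ s, if l.1 = 0 then 0 else (1 / (z - l) + 1 / l + z / l ^ 2)) U := by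
    intro x hx
    have := logDeriv_prod (s := s) (f := fun (l : L.lattice) z ↦ EF (z / l)) (x := x)
      (fun l _ ↦ EF_div_ne_zero (.inl (by rintro rfl; exact hx l.2)))
      (fun l _ ↦ (differentiable_EF_div l.1) x)
    refine this.trans (Finset.sum_congr rfl fun l _ ↦ ?_)
    split_ifs with h
    · rw [h]; exact logDeriv_EF_zero x
    · exact logDeriv_EF_div (by rintro rfl; exact hx l.2) h
  refine Eq.symm (((e.eventuallyEq_of_mem (hU.mem_nhds hz)).deriv_eq).trans ?_)
  refine HasDerivAt.deriv ?_
  refine HasDerivAt.fun_sum fun l _ ↦ ?_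
  split_ifs with h
  · simpa using hasDerivAt_const z (0 : ℂ)
  · have hzl : z - l.1 ≠ 0 := by
      rw [sub_ne_zero]; rintro rfl; exact hz l.2
    have h1 := (((hasDerivAt_id z).sub_const l.1).inv hzl).add_const (1 / l.1)
    have h2 := (hasDerivAt_id z).div_const (l.1 ^ 2)
    convert! h1.add h2 using 1
    · ext x; simp
    · simp; ring

lemma logDeriv_sig {z : ℂ} (hz : z ∉ L.lattice) :
    logDeriv L.sig z = 1 / z + logDeriv L.PP z := by
  have h0 : z ≠ 0 := by rintro rfl; simp at hz
  have := logDeriv_mul (f := fun z : ℂ ↦ z) (g := L.PP) z h0 (L.PP_ne_zero' hz)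
    differentiableAt_id (L.differentiable_PP z)
  refine this.trans ?_
  simp [logDeriv_apply]

lemma differentiableOn_logDeriv_PP : DifferentiableOn ℂ (logDeriv L.PP) (L.lattice : Set ℂ)ᶜ :=
  (L.differentiable_PP.differentiableOn.deriv L.isOpen_compl).div
    L.differentiable_PP.differentiableOn fun _ hx ↦ L.PP_ne_zero' hx

lemma hasDerivAt_logDeriv_sig {z : ℂ} (hz : z ∉ L.lattice) :
    HasDerivAt (logDeriv L.sig) (- L.weierstrassP z) z := by
  have h0 : z ≠ 0 := by rintro rfl; simp at hz
  have h1 := (L.differentiableOn_logDeriv_PP.differentiableAt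
    (L.isOpen_compl.mem_nhds hz)).hasDerivAt
  rw [L.deriv_logDeriv_PP hz] at h1
  have h2 := (hasDerivAt_inv h0).add h1
  have e : (logDeriv L.sig) =ᶠ[𝓝 z] (fun z : ℂ ↦ z⁻¹) + logDeriv L.PP := by
    filter_upwards [L.isOpen_compl.mem_nhds hz] with x hx
    rw [L.logDeriv_sig hx]; simp
  refine (h2.congr_of_eventuallyEq e).congr_deriv ?_
  have := L.weierstrassPExcept_add 0 z
  simp at this
  rw [← this]; ring

lemma exists_eta (w : ℂ) (hw : w ∈ L.lattice) :
    ∃ η : ℂ, ∀ z ∉ L.lattice, logDeriv L.sig (z + w) = logDeriv L.sig z + η := by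
  have hmem (z : ℂ) (hz : z ∉ L.lattice) : z + w ∉ L.lattice := by
    rwa [Submodule.add_mem_iff_left _ hw]
  have hD (z : ℂ) (hz : z ∉ L.lattice) :
      HasDerivAt (fun z ↦ logDeriv L.sig (z + w)) (- L.weierstrassP z) z := by
    have := (L.hasDerivAt_logDeriv_sig (hmem z hz)).comp_add_const z w
    rwa [L.weierstrassP_add_coe z ⟨w, hw⟩] at this
  obtain ⟨a, ha⟩ := L.isOpen_compl.exists_eq_add_of_deriv_eq L.isPreconnected_compl
    (f := fun z ↦ logDeriv L.sig (z + w)) (g := logDeriv L.sig)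
    (fun z hz ↦ (hD z hz).differentiableAt.differentiableWithinAt)
    (fun z hz ↦ (L.hasDerivAt_logDeriv_sig hz).differentiableAt.differentiableWithinAt)
    (fun z hz ↦ by rw [(hD z hz).deriv, (L.hasDerivAt_logDeriv_sig hz).deriv])
  exact ⟨a, ha⟩

lemma sig_quasi (w : ℂ) (hw : w ∈ L.lattice) (η : ℂ)
    (hη : ∀ z ∉ L.lattice, logDeriv L.sig (z + w) = logDeriv L.sig z + η) :
    ∃ C : ℂ, C ≠ 0 ∧ ∀ z, L.sig (z + w) = C * Complex.exp (η * z) * L.sig z := by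
  have hmem (z : ℂ) (hz : z ∉ L.lattice) : z + w ∉ L.lattice := by
    rwa [Submodule.add_mem_iff_left _ hw]
  have hd1 : Differentiable ℂ (fun z ↦ L.sig (z + w)) := L.differentiable_sig.comp (by fun_prop)
  have hde : Differentiable ℂ (fun z ↦ Complex.exp (η * z)) := by fun_prop
  have hd2 : Differentiable ℂ (fun z ↦ Complex.exp (η * z) * L.sig z) :=
    hde.mul L.differentiable_sig
  obtain ⟨C, hC, h⟩ := (logDeriv_eqOn_iff (f := fun z ↦ L.sig (z + w))
    (g := fun z ↦ Complex.exp (η * z) * L.sig z) hd1.differentiableOn hd2.differentiableOn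
    L.isOpen_compl L.isPreconnected_compl
    (fun x hx ↦ mul_ne_zero (Complex.exp_ne_zero _) (L.sig_ne_zero hx))
    (fun x hx ↦ L.sig_ne_zero (hmem x hx))).mp (by
      intro x hx
      rw [logDeriv_mul (f := fun z ↦ Complex.exp (η * z)) x (Complex.exp_ne_zero _)
        (L.sig_ne_zero hx) (hde x)
        (L.differentiable_sig x)]
      have h1 := hη x hx
      have h2 : logDeriv (fun z ↦ L.sig (z + w)) x = logDeriv L.sig (x + w) := by
        simp [logDeriv_apply, deriv_comp_add_const]
      have h3 : logDeriv (fun z ↦ Complex.exp (η * z)) x = η := by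
        have : HasDerivAt (fun z ↦ Complex.exp (η * z)) (Complex.exp (η * x) * (η * 1)) x :=
          ((hasDerivAt_id x).const_mul η).cexp
        rw [logDeriv_apply, this.deriv]
        field_simp [Complex.exp_ne_zero]
      rw [h2, h3, h1]; ring)
  refine ⟨C, hC, ?_⟩
  have hdense : Dense ((L.lattice : Set ℂ)ᶜ) := by
    have : Countable L.lattice := L.latticeEquivProd.toEquiv.countable_iff.mpr inferInstance
    exact (Set.to_countable (L.lattice : Set ℂ)).dense_compl ℂ
  have := Continuous.ext_on hdense hd1.continuous (hd2.continuous.const_smul C) h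
  intro z
  have := congrFun this z
  simpa [mul_assoc] using this


section Hex

lemma hex_ne_zero {t : ℂ} (ht : t ^ 2 = t - 1) : t ≠ 0 := by
  rintro rfl; norm_num at ht

lemma hex_inv {t : ℂ} (ht : t ^ 2 = t - 1) : t * (1 - t) = 1 := by linear_combination -ht

lemma hex_r_ne {t : ℂ} (ht : t ^ 2 = t - 1) : (2 - t) ≠ 0 := by
  intro h
  have : (1 + t) * (2 - t) = 3 := by linear_combination -ht
  rw [h] at this; norm_num at this


lemma hex_inv_mem {t : ℂ} (ht : t ^ 2 = t - 1)
    (hm : ∀ l ∈ L.lattice, t * l ∈ L.lattice) (l : ℂ) (hl : l ∈ L.lattice) : (1 - t) * l ∈ L.lattice := by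
  have := sub_mem hl (hm l hl)
  rwa [sub_mul, one_mul]

/-- Multiplication by `t` as a permutation of the lattice. -/
def hexEquiv {t : ℂ} (ht : t ^ 2 = t - 1)
    (hm : ∀ l ∈ L.lattice, t * l ∈ L.lattice) : L.lattice ≃ L.lattice where
  toFun l := ⟨t * l.1, hm l.1 l.2⟩
  invFun l := ⟨(1 - t) * l.1, hex_inv_mem L ht hm l.1 l.2⟩
  left_inv l := by
    ext; simp only; linear_combination l.1 * hex_inv ht
  right_inv l := by
    ext; simp only; linear_combination l.1 * hex_inv ht

lemma PP_hex {t : ℂ} (ht : t ^ 2 = t - 1)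
    (hm : ∀ l ∈ L.lattice, t * l ∈ L.lattice) (z : ℂ) : L.PP (t * z) = L.PP z := by
  unfold PP
  rw [← (hexEquiv L ht hm).tprod_eq]
  refine tprod_congr fun l ↦ ?_
  simp only [hexEquiv, Equiv.coe_fn_mk]
  rw [mul_div_mul_left _ _ (hex_ne_zero ht)]

lemma sig_hex {t : ℂ} (ht : t ^ 2 = t - 1)
    (hm : ∀ l ∈ L.lattice, t * l ∈ L.lattice) (z : ℂ) : L.sig (t * z) = t * L.sig z := by
  rw [sig, sig, L.PP_hex ht hm]; ring

lemma wp_hex {t : ℂ} (ht : t ^ 2 = t - 1)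
    (hm : ∀ l ∈ L.lattice, t * l ∈ L.lattice) (z : ℂ) : L.weierstrassP (t * z) = (t ^ 2)⁻¹ * L.weierstrassP z := by
  unfold weierstrassP
  rw [← (hexEquiv L ht hm).tsum_eq, ← tsum_mul_left]
  refine tsum_congr fun l ↦ ?_
  simp only [hexEquiv, Equiv.coe_fn_mk]
  rw [← mul_sub, mul_pow, mul_pow]
  simp only [one_div, mul_inv]
  ring

lemma logDeriv_sig_hex {t : ℂ} (ht : t ^ 2 = t - 1)
    (hm : ∀ l ∈ L.lattice, t * l ∈ L.lattice) (z : ℂ) : logDeriv L.sig (t * z) = (1 - t) * logDeriv L.sig z := by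
  have h : (fun z ↦ L.sig (t * z)) = fun z ↦ t * L.sig z := funext (L.sig_hex ht hm)
  have h1 := congrFun (congrArg deriv h) z
  have h0 := hex_ne_zero ht
  rw [deriv_comp_mul_left, smul_eq_mul, deriv_const_mul_field] at h1
  have h2 := mul_left_cancel₀ h0 h1
  have h3 : (1 - t) = t⁻¹ := (inv_eq_of_mul_eq_one_right (hex_inv ht)).symm
  rw [logDeriv_apply, logDeriv_apply, h2, L.sig_hex ht hm, h3]
  rw [div_eq_mul_inv, div_eq_mul_inv, mul_inv]; ring

/-- The sigma quotient. -/
def HH (t : ℂ) (z : ℂ) : ℂ := (2 - t)⁻¹ * L.sig ((2 - t) * z) / L.sig z ^ 3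

lemma HH_hex {t : ℂ} (ht : t ^ 2 = t - 1)
    (hm : ∀ l ∈ L.lattice, t * l ∈ L.lattice) (z : ℂ) : HH L t (t * z) = (t ^ 2)⁻¹ * HH L t z := by
  have h0 := hex_ne_zero ht
  unfold HH
  rw [show (2 - t) * (t * z) = t * ((2 - t) * z) by ring, L.sig_hex ht hm, L.sig_hex ht hm]
  rw [mul_pow]
  field_simp

lemma HH_quasi {t : ℂ} (ht : t ^ 2 = t - 1)
    (hm : ∀ l ∈ L.lattice, t * l ∈ L.lattice) (w : ℂ) (hw : w ∈ L.lattice) : ∃ K : ℂ, K ≠ 0 ∧ ∀ z, HH L t (z + w) = K * HH L t z := by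
  have h0 := hex_ne_zero ht
  have hi := hex_inv ht
  obtain ⟨η, hη⟩ := L.exists_eta w hw
  have hw' : (2 - t) * w ∈ L.lattice := by
    have := add_mem hw (hex_inv_mem L ht hm w hw)
    convert this using 1; ring
  have htz (z : ℂ) (hz : z ∉ L.lattice) : t * z ∉ L.lattice := by
    intro h
    apply hz
    have := hex_inv_mem L ht hm _ h
    rwa [show (1 - t) * (t * z) = z by linear_combination z * hi] at this
  have hη1 (z : ℂ) (hz : z ∉ L.lattice) :
      logDeriv L.sig (z + (1 - t) * w) = logDeriv L.sig z + t * η := by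
    have h1 := L.logDeriv_sig_hex ht hm (z + (1 - t) * w)
    have h2 := L.logDeriv_sig_hex ht hm z
    have h3 := hη (t * z) (htz z hz)
    rw [show t * (z + (1 - t) * w) = t * z + w by linear_combination w * hi] at h1
    rw [h1, h2] at h3
    linear_combination t * h3 + (logDeriv L.sig z - logDeriv L.sig (z + (1 - t) * w)) * hi
  have hη2 (z : ℂ) (hz : z ∉ L.lattice) :
      logDeriv L.sig (z + (2 - t) * w) = logDeriv L.sig z + (1 + t) * η := by
    have hz' : z + w ∉ L.lattice := by rwa [Submodule.add_mem_iff_left _ hw]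
    have := hη1 (z + w) hz'
    rw [hη z hz, show z + w + (1 - t) * w = z + (2 - t) * w by ring] at this
    rw [this]; ring
  obtain ⟨C, hC, h⟩ := L.sig_quasi w hw η hη
  obtain ⟨C', hC', h'⟩ := L.sig_quasi _ hw' _ hη2
  refine ⟨C' / C ^ 3, by positivity, fun z ↦ ?_⟩
  have e : Complex.exp ((1 + t) * η * ((2 - t) * z)) = Complex.exp (η * z) ^ 3 := by
    rw [← Complex.exp_nat_mul]
    congr 1
    push_cast
    linear_combination -η * z * ht
  have hE := Complex.exp_ne_zero (η * z)
  unfold HH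
  rw [mul_add, h', h, e, mul_pow, mul_pow]
  field_simp

lemma HH_exists_ne {t : ℂ} (ht : t ^ 2 = t - 1)
    (hm : ∀ l ∈ L.lattice, t * l ∈ L.lattice) : ∃ z, HH L t z ≠ 0 := by
  have hr := hex_r_ne ht
  refine ⟨(2 - t)⁻¹ * (L.ω₁ / 2), ?_⟩
  have h1 := L.ω₁_div_two_notMem_lattice
  have h2 : (2 - t)⁻¹ * (L.ω₁ / 2) ∉ L.lattice := by
    intro h
    apply h1
    have := add_mem h (hex_inv_mem L ht hm _ h)
    convert this using 1
    field_simp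
    ring
  unfold HH
  rw [mul_inv_cancel_left₀ hr]
  exact div_ne_zero (mul_ne_zero (inv_ne_zero hr) (L.sig_ne_zero h1))
    (pow_ne_zero _ (L.sig_ne_zero h2))

lemma HH_periodic {t : ℂ} (ht : t ^ 2 = t - 1)
    (hm : ∀ l ∈ L.lattice, t * l ∈ L.lattice) (w : ℂ) (hw : w ∈ L.lattice) (z : ℂ) : HH L t (z + w) = HH L t z := by
  have h0 := hex_ne_zero ht
  obtain ⟨K, hK, h⟩ := HH_quasi L ht hm w hw
  suffices K = 1 by rw [h, this, one_mul]
  have hrot (w' : ℂ) (h : ∀ z, HH L t (z + w') = K * HH L t z) (z : ℂ) :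
      HH L t (z + t * w') = K * HH L t z := by
    have e1 := HH_hex L ht hm (t⁻¹ * z + w')
    have e2 := HH_hex L ht hm (t⁻¹ * z)
    rw [mul_add, mul_inv_cancel_left₀ h0] at e1
    rw [mul_inv_cancel_left₀ h0] at e2
    rw [e1, e2, h]; ring
  have h1 := hrot w h
  have h2 := hrot (t * w) h1
  obtain ⟨z, hz⟩ := HH_exists_ne L ht hm
  have e := h2 (z + w)
  rw [show z + w + t * (t * w) = z + t * w by linear_combination w * ht, h1, h] at e
  have e := mul_left_cancel₀ hK e
  have : (K - 1) * HH L t z = 0 := by linear_combination -e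
  rcases mul_eq_zero.mp this with h | h
  · linear_combination h
  · exact absurd h hz

lemma zero_of_rot {f : ℂ → ℂ} (hf : ContinuousAt f 0) {t c : ℂ} (ht : t ≠ 0) (hc : c ≠ 1)
    (h : ∀ z ≠ 0, f (t * z) = c * f z) : f 0 = 0 := by
  have h1 : Tendsto (fun z ↦ f (t * z)) (𝓝[≠] 0) (𝓝 (f 0)) := by
    have hcomp : ContinuousAt (fun z ↦ f (t * z)) 0 :=
      ContinuousAt.comp (g := f) (f := fun z ↦ t * z) (by simpa using hf) (by fun_prop)
    simpa using hcomp.tendsto.mono_left nhdsWithin_le_nhds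
  have h2 : Tendsto (fun z ↦ c * f z) (𝓝[≠] 0) (𝓝 (c * f 0)) :=
    (hf.tendsto.mono_left nhdsWithin_le_nhds).const_mul c
  have h3 := tendsto_nhds_unique (h1.congr' (by
    filter_upwards [self_mem_nhdsWithin] with z hz using h z hz)) h2
  have : (c - 1) * f 0 = 0 := by linear_combination -h3
  rcases mul_eq_zero.mp this with h | h
  · exact absurd (by linear_combination h) hc
  · exact h

lemma analyticAt_dslope {f : ℂ → ℂ} (hf : AnalyticAt ℂ f 0) : AnalyticAt ℂ (dslope f 0) 0 := by
  obtain ⟨p, hp⟩ := hf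
  exact ⟨_, hp.has_fpower_series_dslope_fslope⟩

lemma analyticAt_D_zero {t : ℂ} (ht : t ^ 2 = t - 1)
    (hm : ∀ l ∈ L.lattice, t * l ∈ L.lattice) : AnalyticAt ℂ (fun z ↦ HH L t z - L.weierstrassP z) 0 := by
  have h0 := hex_ne_zero ht
  have hr := hex_r_ne ht
  set Q : ℂ → ℂ := fun z ↦ L.PP ((2 - t) * z) / L.PP z ^ 3 with hQdef
  have hPa (x : ℂ) : AnalyticAt ℂ L.PP x := L.differentiable_PP.analyticAt x
  have hQ : AnalyticAt ℂ Q 0 := by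
    refine AnalyticAt.div ?_ ((hPa 0).pow 3) (by simp [PP_zero])
    exact AnalyticAt.fun_comp (hPa _) (by fun_prop)
  have hQ0 : Q 0 = 1 := by simp [hQdef, PP_zero]
  have hQt (z : ℂ) : Q (t * z) = Q z := by
    simp only [hQdef]
    rw [show (2 - t) * (t * z) = t * ((2 - t) * z) by ring, L.PP_hex ht hm, L.PP_hex ht hm]
  set Q1 := dslope Q 0 with hQ1def
  have hQ1 : AnalyticAt ℂ Q1 0 := analyticAt_dslope hQ
  have hQ1z (z : ℂ) (hz : z ≠ 0) : Q1 z = (Q z - 1) / z := by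
    rw [hQ1def, dslope_of_ne _ hz, slope_def_field, hQ0, sub_zero]
  have hQ10 : Q1 0 = 0 := by
    refine zero_of_rot hQ1.continuousAt h0 (c := t⁻¹) ?_ fun z hz ↦ ?_
    · intro h
      rw [inv_eq_one] at h
      rw [h] at ht; norm_num at ht
    · rw [hQ1z _ (mul_ne_zero h0 hz), hQ1z _ hz, hQt]
      field_simp
  set Q2 := dslope Q1 0 with hQ2def
  have hQ2 : AnalyticAt ℂ Q2 0 := analyticAt_dslope hQ1
  have hQ2z (z : ℂ) (hz : z ≠ 0) : Q2 z = (Q z - 1) / z ^ 2 := by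
    rw [hQ2def, dslope_of_ne _ hz, slope_def_field, hQ10, sub_zero, hQ1z z hz]
    field_simp
    simp
  have hQ20 : Q2 0 = 0 := by
    refine zero_of_rot hQ2.continuousAt h0 (c := (t ^ 2)⁻¹) ?_ fun z hz ↦ ?_
    · intro h
      rw [inv_eq_one, ht] at h
      have : t = 2 := by linear_combination h
      rw [this] at ht; norm_num at ht
    · rw [hQ2z _ (mul_ne_zero h0 hz), hQ2z _ hz, hQt]
      field_simp
  have hE := hQ2.sub (L.analyticAt_weierstrassPExcept 0)
  refine hE.congr (.of_forall fun z ↦ ?_)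
  have hP := L.weierstrassPExcept_add 0 z
  simp at hP
  rcases eq_or_ne z 0 with rfl | hz
  · simp [hQ20, HH, sig]
  · simp only [Pi.sub_apply]
    rw [hQ2z z hz, ← hP, HH, sig, sig]
    simp only [hQdef]
    field_simp
    ring

lemma HH_eq_wp {t : ℂ} (ht : t ^ 2 = t - 1)
    (hm : ∀ l ∈ L.lattice, t * l ∈ L.lattice) (z : ℂ) : HH L t z = L.weierstrassP z := by
  have hper (w : ℂ) (hw : w ∈ L.lattice) (z : ℂ) :
      HH L t (z + w) - L.weierstrassP (z + w) = HH L t z - L.weierstrassP z := by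
    rw [HH_periodic L ht hm w hw, L.weierstrassP_add_coe z ⟨w, hw⟩]
  have hD : Differentiable ℂ (fun z ↦ HH L t z - L.weierstrassP z) := by
    intro x
    by_cases hx : x ∈ L.lattice
    · have h1 := (analyticAt_D_zero L ht hm).differentiableAt
      have h2 : DifferentiableAt ℂ (fun z ↦ (fun z ↦ HH L t z - L.weierstrassP z) (z - x)) x := by
        refine DifferentiableAt.comp (f := fun z ↦ z - x)
          (g := fun z ↦ HH L t z - L.weierstrassP z) x ?_ (by fun_prop)
        simpa using h1
      convert! h2 using 1
      ext z
      have := hper x hx (z - x)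
      rw [sub_add_cancel] at this
      exact this
    · refine DifferentiableAt.sub ?_ (L.differentiableOn_weierstrassP.differentiableAt
        (L.isOpen_compl.mem_nhds hx))
      refine DifferentiableAt.div ?_ ((L.differentiable_sig x).pow 3)
        (pow_ne_zero _ (L.sig_ne_zero hx))
      exact (L.differentiable_sig.comp (by fun_prop) x).const_mul _
  have := hD.apply_eq_apply_of_bounded (IsZLattice.isCompact_range_of_periodic L.lattice _
    hD.continuous fun z w hw ↦ hper w hw z).isBounded z 0
  have h0 : HH L t 0 - L.weierstrassP 0 = 0 := by simp [HH, sig]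
  exact sub_eq_zero.mp (this.trans h0)

end Hex
end PeriodPair

lemma sqrt_three_sq : ((Real.sqrt 3 : ℝ) : ℂ) ^ 2 = 3 := by
  norm_cast
  norm_num

lemma rr_inv : rr⁻¹ = 2 - τ := by
  apply inv_eq_of_mul_eq_one_right
  unfold rr
  rw [show (Real.pi * Complex.I / 6 : ℂ) = ((Real.pi / 6 : ℝ) : ℂ) * Complex.I by push_cast; ring,
    Complex.exp_mul_I, ← Complex.ofReal_cos, ← Complex.ofReal_sin, Real.cos_pi_div_six,
    Real.sin_pi_div_six, tau_eq]
  push_cast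
  linear_combination (1 / 4 : ℂ) * sqrt_three_sq - (1 / 12 : ℂ) * Complex.I ^ 2 * sqrt_three_sq
    - 1 / 4 * Complex.I_sq - 1 / 12 * (Real.sqrt 3 : ℝ) * Complex.I * sqrt_three_sq

lemma varpi_pos : 0 < ϖ₀ := by
  unfold ϖ₀
  have := Real.Gamma_pos_of_pos (s := 1 / 3) (by norm_num)
  positivity

/-- The hexagonal period pair. -/
def hexPair : PeriodPair where
  ω₁ := ϖ₀
  ω₂ := τ * ϖ₀
  indep := by
    rw [LinearIndependent.pair_iff]
    intro a b h
    have h3 : Real.sqrt 3 ≠ 0 := by positivity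
    have hp := varpi_pos.ne'
    have hre := congrArg Complex.re h
    have him := congrArg Complex.im h
    simp [tau_eq, hp, h3] at hre him
    subst him
    simpa [hp] using hre

lemma hexPair_symm (p : ℤ × ℤ) : (hexPair.latticeEquivProd.symm p).1 = hexPt ϖ₀ p := by
  rw [PeriodPair.latticeEquiv_symm_apply]
  simp only [hexPair, hexPt]; ring

lemma hexPair_mem (z : ℂ) : z ∈ hexPair.lattice ↔ z ∈ hexLattice ϖ₀ := by
  constructor
  · intro h
    refine ⟨hexPair.latticeEquivProd ⟨z, h⟩, ?_⟩
    rw [← hexPair_symm]; simp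
  · rintro ⟨p, rfl⟩
    rw [← hexPair_symm]; exact Subtype.property _

lemma hexPair_tau (l : ℂ) (hl : l ∈ hexPair.lattice) : τ * l ∈ hexPair.lattice := by
  rw [hexPair_mem] at *
  obtain ⟨⟨m, n⟩, rfl⟩ := hl
  refine ⟨(-n, m + n), ?_⟩
  simp only [hexPt]
  push_cast
  linear_combination -(n : ℂ) * ϖ₀ * tau_sq

lemma hexPt_zero : hexPt ϖ₀ 0 = 0 := by simp [hexPt]

lemma wSigma_eq (z : ℂ) : wSigma ϖ₀ z = hexPair.sig z := by
  unfold wSigma PeriodPair.sig PeriodPair.PP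
  congr 1
  rw [← hexPair.latticeEquivProd.symm.toEquiv.tprod_eq]
  have h := tprod_subtype_eq_of_mulSupport_subset (s := {p : ℤ × ℤ | p ≠ 0})
    (f := fun p ↦ EF (z / hexPt ϖ₀ p)) (by
      intro p hp h0
      apply hp
      simp only [h0, hexPt_zero, div_zero, EF_zero])
  refine Eq.trans ?_ (h.trans (tprod_congr fun p ↦ ?_))
  · refine tprod_congr fun p ↦ ?_
    unfold EF
    rw [div_pow, div_div, mul_comm (2 : ℂ)]
  · rw [← hexPair_symm]; rfl

lemma wp_eq (z : ℂ) : wp z = hexPair.weierstrassP z := by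
  have hs : Summable fun p : ℤ × ℤ ↦ (1 / (z - hexPt ϖ₀ p) ^ 2 - 1 / (hexPt ϖ₀ p) ^ 2) := by
    have := (hexPair.hasSum_weierstrassP z).summable
    rw [← hexPair.latticeEquivProd.symm.toEquiv.summable_iff] at this
    refine this.congr fun p ↦ ?_
    rw [← hexPair_symm]; rfl
  have e : hexPair.weierstrassP z
      = ∑' p : ℤ × ℤ, (1 / (z - hexPt ϖ₀ p) ^ 2 - 1 / (hexPt ϖ₀ p) ^ 2) := by
    unfold PeriodPair.weierstrassP
    rw [← hexPair.latticeEquivProd.symm.toEquiv.tsum_eq]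
    refine tsum_congr fun p ↦ ?_
    rw [← hexPair_symm]; rfl
  rw [e, wp, ← hs.sum_add_tsum_subtype_compl {0}]
  congr 1
  · simp [hexPt_zero]
  · exact (Equiv.subtypeEquivRight (p := fun p : ℤ × ℤ ↦ p ≠ 0)
      (q := fun p ↦ p ∉ ({0} : Finset (ℤ × ℤ))) (by simp)).tsum_eq
      (fun p : {p : ℤ × ℤ // p ∉ ({0} : Finset (ℤ × ℤ))} ↦
        (1 / (z - hexPt ϖ₀ p) ^ 2 - 1 / (hexPt ϖ₀ p) ^ 2))

/-- `℘(z) = r σ(r⁻¹ z)/σ(z)³`, i.e. `℘(z) = σ(z; r𝕋)/σ(z; 𝕋)³`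
(using `σ(z; c𝕋) = c σ(z/c; 𝕋)`). -/
theorem wp_eq_sigma_quotient (z : ℂ) (hz : z ∉ hexLattice ϖ₀) :
    wp z = rr * wSigma ϖ₀ (rr⁻¹ * z) / (wSigma ϖ₀ z) ^ 3 := by
  have h := PeriodPair.HH_eq_wp hexPair tau_sq hexPair_tau z
  rw [wp_eq, ← h, PeriodPair.HH, wSigma_eq, wSigma_eq, rr_inv, ← rr_inv, inv_inv]
end
end
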